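/- Let R be a right artinian ring and M a finitely generated right R-module of finite projective dimension. Then φ(M) equals the projective dimension of M, where φ is the Igusa–Todorov function. -/

import Mathlib

open Module Function

universe u

variable (R : Type u) [Ring R]

/-- A finitely generated right `R`-module, encoded as a module over `Rᵐᵒᵖ`. -/
structure FGMod where
  carrier : Type u
  [isAddCommGroup : AddCommGroup carrier]
  [isModule : Module Rᵐᵒᵖ carrier]
  [isFinite : Module.Finite Rᵐᵒᵖ carrier]

attribute [instance] FGMod.isAddCommGroup FGMod.isModule FGMod.isFinite

instance : CoeSort (FGMod R) (Type u) := ⟨FGMod.carrier⟩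

variable {R}

/-- Isomorphism of f.g. right modules. -/
def FGMod.Iso (M N : FGMod R) : Prop := Nonempty (M ≃ₗ[Rᵐᵒᵖ] N)

/-- Direct sum. -/
def FGMod.prod (M N : FGMod R) : FGMod R := ⟨M × N⟩

/-- `M^k`, the direct sum of `k` copies of `M`. -/
def FGMod.pow (M : FGMod R) (k : ℕ) : FGMod R := ⟨Fin k → M⟩

/-- `N` is (isomorphic to) a direct summand of `M`. -/
def FGMod.IsSummand (N M : FGMod R) : Prop :=
  ∃ A B : Submodule Rᵐᵒᵖ M, IsCompl A B ∧ Nonempty (N ≃ₗ[Rᵐᵒᵖ] A)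

/-- `M` is indecomposable. -/
def FGMod.Indec (M : FGMod R) : Prop :=
  Nontrivial M ∧ ∀ A B : Submodule Rᵐᵒᵖ M, IsCompl A B → A = ⊥ ∨ B = ⊥

/-- `M` is projective. -/
def FGMod.Proj (M : FGMod R) : Prop := Module.Projective Rᵐᵒᵖ M

/-- `f : P → M` is a projective cover: `P` projective, `f` surjective with superfluous kernel. -/
def IsProjCover (M P : FGMod R) (f : P →ₗ[Rᵐᵒᵖ] M) : Prop :=
  P.Proj ∧ Surjective f ∧ ∀ N : Submodule Rᵐᵒᵖ P, N ⊔ LinearMap.ker f = ⊤ → N = ⊤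

/-- `N` is a (first) syzygy of `M`: the kernel of a projective cover of `M`. -/
def IsSyzygy (M N : FGMod R) : Prop :=
  ∃ (P : FGMod R) (f : P →ₗ[Rᵐᵒᵖ] M),
    IsProjCover M P f ∧ Nonempty (N ≃ₗ[Rᵐᵒᵖ] LinearMap.ker f)

/-- `N` is an `n`-th syzygy of `M`. -/
def IsSyzygyN : ℕ → FGMod R → FGMod R → Prop
  | 0, M, N => M.Iso N
  | n+1, M, N => ∃ L, IsSyzygy M L ∧ IsSyzygyN n L N

/-- `M` has projective dimension at most `n`. -/
def HasPdLE : ℕ → FGMod R → Prop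
  | 0, M => M.Proj
  | n+1, M => M.Proj ∨ ∃ N, IsSyzygy M N ∧ HasPdLE n N

/-- `M` has finite projective dimension. -/
def FinPd (M : FGMod R) : Prop := ∃ n, HasPdLE n M

/-- The projective dimension of `M` (junk value if infinite). -/
noncomputable def pdIT (M : FGMod R) : ℕ := sInf {n | HasPdLE n M}

variable (R)

/-- The Igusa–Todorov relations in the free abelian group on f.g. right modules:
`[A] - [B] - [C]` whenever `A ≅ B ⊕ C`, and `[P]` for `P` projective. -/
def ITRel : Set (FreeAbelianGroup (FGMod R)) :=
  {x | ∃ A B C : FGMod R, Nonempty (A ≃ₗ[Rᵐᵒᵖ] (B × C : Type u)) ∧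
        x = FreeAbelianGroup.of A - FreeAbelianGroup.of B - FreeAbelianGroup.of C} ∪
  {x | ∃ P : FGMod R, P.Proj ∧ x = FreeAbelianGroup.of P}

/-- The Igusa–Todorov group `K`. -/
def ITK := FreeAbelianGroup (FGMod R) ⧸ AddSubgroup.closure (ITRel R)

noncomputable instance : AddCommGroup (ITK R) :=
  QuotientAddGroup.Quotient.addCommGroup _

/-- The class `[M]` in `K`. -/
noncomputable def ITcls (M : FGMod R) : ITK R := QuotientAddGroup.mk (FreeAbelianGroup.of M)

/-- `⟨M⟩`: the subgroup of `K` generated by the indecomposable non-projective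
direct summands of `M`. -/
noncomputable def ITgen (M : FGMod R) : AddSubgroup (ITK R) :=
  AddSubgroup.closure
    {x | ∃ N : FGMod R, N.IsSummand M ∧ N.Indec ∧ ¬N.Proj ∧ x = ITcls R N}

/-- The rank of a subgroup of `K`. -/
noncomputable def rkIT (H : AddSubgroup (ITK R)) : ℕ :=
  Module.finrank ℤ (AddSubgroup.toIntSubmodule H)

/-- `OmK` is a syzygy endomorphism of `K`: a group endomorphism sending `[M]` to `[ΩM]`. -/
def IsSyzygyEnd (OmK : AddMonoid.End (ITK R)) : Prop :=
  ∀ M N : FGMod R, IsSyzygy M N → OmK (ITcls R M) = ITcls R N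

/-- The Igusa–Todorov function `φ`: the least `n` such that the rank of
`Ω^i⟨M⟩` equals that of `Ω^n⟨M⟩` for all `i ≥ n`. -/
noncomputable def phiIT (OmK : AddMonoid.End (ITK R)) (M : FGMod R) : ℕ :=
  sInf {n | ∀ i, n ≤ i →
    rkIT R ((ITgen R M).map ((OmK ^ i : AddMonoid.End (ITK R)) : ITK R →+ ITK R))
      = rkIT R ((ITgen R M).map ((OmK ^ n : AddMonoid.End (ITK R)) : ITK R →+ ITK R))}

/-- The second Igusa–Todorov function `ψ`. -/
noncomputable def psiIT (OmK : AddMonoid.End (ITK R)) (M : FGMod R) : ℕ :=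
  phiIT R OmK M + sSup {d | ∃ N X : FGMod R, IsSyzygyN (phiIT R OmK M) M N ∧
      X.IsSummand N ∧ FinPd X ∧ d = pdIT X}

/-- The socle of a module: the sum of its simple submodules. -/
def socleIT (M : FGMod R) : Submodule Rᵐᵒᵖ M :=
  sSup {S : Submodule Rᵐᵒᵖ M | IsSimpleModule Rᵐᵒᵖ S}


/-!
Assigning to `M` the length of `Ω M` is additive on direct sums and vanishes exactly on the
projective modules, so it induces a homomorphism `K → ℤ` showing that `[M]` is a torsion element of
`K` only when `M` is projective. Over an artinian ring indecomposables have local endomorphism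
rings, hence `⟨M⟩` is finitely generated and contains `[M]`. Therefore `Ωⁿ⟨M⟩` has rank `0` iff
`[Ωⁿ M]` is torsion, iff `Ωⁿ M` is projective, iff `pd M ≤ n`. When `pd M` is finite the ranks
eventually vanish, so they are constant from `n` on exactly when the `n`-th one is already `0`.
-/

section SuperfluousKernels

variable {S : Type*} [Ring S] {M N P Q : Type*} [AddCommGroup M] [AddCommGroup N] [AddCommGroup P]
  [AddCommGroup Q] [Module S M] [Module S N] [Module S P] [Module S Q]

/-- A submodule `K` of `P` is superfluous (or small) if it has no proper supplement: this is the
condition on the kernel of a projective cover in `IsProjCover`. -/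
def IsSuperfluous (K : Submodule S P) : Prop :=
  ∀ N : Submodule S P, N ⊔ K = ⊤ → N = ⊤

namespace IsSuperfluous

theorem map {K : Submodule S P} (hK : IsSuperfluous K) (f : P →ₗ[S] Q) :
    IsSuperfluous (K.map f) := by
  intro N hN
  have hcomap : N.comap f = ⊤ := by
    refine hK _ (eq_top_iff.2 fun x _ => ?_)
    obtain ⟨y, hy, _, ⟨k, hk, rfl⟩, hyk⟩ := Submodule.mem_sup.1 (hN ▸ Submodule.mem_top (x := f x))
    refine Submodule.mem_sup.2 ⟨x - k, ?_, k, hk, sub_add_cancel x k⟩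
    rwa [Submodule.mem_comap, map_sub, ← hyk, add_sub_cancel_right]
  have hle : K.map f ≤ N := Submodule.map_le_iff_le_comap.2 (hcomap ▸ le_top)
  rwa [sup_eq_left.2 hle] at hN

theorem sup {K L : Submodule S P} (hK : IsSuperfluous K) (hL : IsSuperfluous L) :
    IsSuperfluous (K ⊔ L) :=
  fun N hN => hK N (hL _ (by rwa [sup_assoc]))

theorem prod {K : Submodule S P} {L : Submodule S Q} (hK : IsSuperfluous K)
    (hL : IsSuperfluous L) : IsSuperfluous (K.prod L) := by
  rw [LinearMap.prod_eq_sup_map]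
  exact (hK.map _).sup (hL.map _)

theorem surjective_of_comp {g : Q →ₗ[S] M} {h : P →ₗ[S] Q} (hg : IsSuperfluous (LinearMap.ker g))
    (hgh : Surjective (g ∘ₗ h)) : Surjective h := by
  rw [← LinearMap.range_eq_top] at hgh ⊢
  apply hg
  rw [← Submodule.comap_map_eq, ← LinearMap.range_comp, hgh, Submodule.comap_top]

end IsSuperfluous

theorem exists_projective_submodule_isSuperfluous_ker [IsArtinian S P] [IsNoetherian S P]
    [Module.Projective S P] {f : P →ₗ[S] M} (hf : Surjective f) :
    ∃ N : Submodule S P, Module.Projective S N ∧ Surjective (f.domRestrict N) ∧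
      IsSuperfluous (LinearMap.ker (f.domRestrict N)) := by
  obtain ⟨N, hN⟩ := exists_minimal_of_wellFoundedLT (fun N : Submodule S P => N.map f = ⊤)
    ⟨⊤, by rw [Submodule.map_top, LinearMap.range_eq_top.2 hf]⟩
  have hsurj : Surjective (f.domRestrict N) := by
    rw [← LinearMap.range_eq_top, LinearMap.range_domRestrict, hN.prop]
  have hker : IsSuperfluous (LinearMap.ker (f.domRestrict N)) := by
    intro L hL
    have hmap : (L.map N.subtype).map f = ⊤ := by
      rw [← Submodule.map_comp, ← LinearMap.range_eq_top.2 hsurj, ← Submodule.map_top, ← hL,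
        Submodule.map_sup, sup_eq_left.2]
      · rfl
      · exact (Submodule.map_le_iff_le_comap.2 le_rfl).trans bot_le
    have hmap_le := hN.le_of_le hmap (Submodule.map_subtype_le N L)
    exact eq_top_iff.2 fun x _ => by simpa using hmap_le x.2
  obtain ⟨h, hh⟩ := Module.projective_lifting_property (f.domRestrict N) f hsurj
  have hretract : Surjective (h ∘ₗ N.subtype) :=
    hker.surjective_of_comp (by rwa [← LinearMap.comp_assoc, hh])
  let e := LinearEquiv.ofBijective (h ∘ₗ N.subtype)
    (IsNoetherian.bijective_of_surjective_endomorphism _ hretract)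
  refine ⟨N, Module.Projective.of_split N.subtype (e.symm ∘ₗ h) ?_, hsurj, hker⟩
  exact LinearMap.ext e.symm_apply_apply

/-- The kernel of a direct sum of two maps is the direct sum of their kernels. -/
def kerProdMapEquiv (f : P →ₗ[S] M) (g : Q →ₗ[S] N) :
    LinearMap.ker (f.prodMap g) ≃ₗ[S] LinearMap.ker f × LinearMap.ker g where
  toFun x := (⟨x.1.1, congrArg Prod.fst x.2⟩, ⟨x.1.2, congrArg Prod.snd x.2⟩)
  invFun y := ⟨(y.1, y.2), Prod.ext y.1.2 y.2.2⟩
  map_add' _ _ := rfl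
  map_smul' _ _ := rfl
  left_inv _ := rfl
  right_inv _ := rfl

end SuperfluousKernels

variable {R}

namespace FGMod

theorem Iso.symm {M N : FGMod R} (h : M.Iso N) : N.Iso M := ⟨h.some.symm⟩

theorem isSummand_iff_exists_retraction {N M : FGMod R} :
    N.IsSummand M ↔
      ∃ (i : N →ₗ[Rᵐᵒᵖ] M) (p : M →ₗ[Rᵐᵒᵖ] N), p ∘ₗ i = LinearMap.id := by
  constructor
  · rintro ⟨A, B, hAB, ⟨e⟩⟩
    refine ⟨A.subtype ∘ₗ e, e.symm ∘ₗ A.projectionOnto B hAB, ?_⟩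
    ext x
    simp
  · rintro ⟨i, p, hpi⟩
    have hleft : LeftInverse p i := LinearMap.congr_fun hpi
    refine ⟨LinearMap.range i, LinearMap.ker (i.rangeRestrict ∘ₗ p), ?_,
      ⟨LinearEquiv.ofInjective i hleft.injective⟩⟩
    refine LinearMap.isCompl_of_proj ?_
    rintro ⟨_, y, rfl⟩
    exact Subtype.ext (congrArg i (hleft y))

theorem Iso.isSummand {N M : FGMod R} (h : N.Iso M) : N.IsSummand M :=
  isSummand_iff_exists_retraction.2 ⟨h.some, h.some.symm, by ext; simp⟩

theorem IsSummand.trans {L M N : FGMod R} (h : L.IsSummand M) (h' : M.IsSummand N) :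
    L.IsSummand N := by
  rw [isSummand_iff_exists_retraction] at *
  obtain ⟨i, p, hpi⟩ := h
  obtain ⟨j, q, hqj⟩ := h'
  refine ⟨j ∘ₗ i, p ∘ₗ q, ?_⟩
  rw [LinearMap.comp_assoc, ← LinearMap.comp_assoc i, hqj, LinearMap.id_comp, hpi]

theorem isSummand_prod_left (A B : FGMod R) : A.IsSummand (A.prod B) :=
  isSummand_iff_exists_retraction.2
    ⟨LinearMap.inl Rᵐᵒᵖ A B, LinearMap.fst Rᵐᵒᵖ A B, LinearMap.fst_comp_inl ..⟩

theorem isSummand_prod_right (A B : FGMod R) : B.IsSummand (A.prod B) :=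
  isSummand_iff_exists_retraction.2
    ⟨LinearMap.inr Rᵐᵒᵖ A B, LinearMap.snd Rᵐᵒᵖ A B, LinearMap.snd_comp_inr ..⟩

theorem IsSummand.exists_iso_prod {N M : FGMod R} (h : N.IsSummand M) :
    ∃ C : FGMod R, M.Iso (N.prod C) := by
  obtain ⟨A, B, hAB, ⟨e⟩⟩ := h
  have : Module.Finite Rᵐᵒᵖ B := Module.Finite.of_surjective (B.projectionOnto A hAB.symm)
    (Submodule.projectionOnto_surjective hAB.symm)
  exact ⟨⟨B⟩, ⟨(Submodule.prodEquivOfIsCompl A B hAB).symm ≪≫ₗ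
    e.symm.prodCongr (LinearEquiv.refl Rᵐᵒᵖ B)⟩⟩

theorem IsSummand.proj {N M : FGMod R} (h : N.IsSummand M) (hM : M.Proj) : N.Proj := by
  obtain ⟨i, p, hpi⟩ := isSummand_iff_exists_retraction.1 h
  have : Module.Projective Rᵐᵒᵖ M := hM
  exact Module.Projective.of_split i p hpi

theorem proj_of_subsingleton (M : FGMod R) [Subsingleton M] : M.Proj :=
  (inferInstance : Module.Projective Rᵐᵒᵖ M)

theorem isSummand_of_isUnit_comp {N A : FGMod R} {i : N →ₗ[Rᵐᵒᵖ] A} {p : A →ₗ[Rᵐᵒᵖ] N}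
    (h : IsUnit (p ∘ₗ i : Module.End Rᵐᵒᵖ N)) : N.IsSummand A := by
  obtain ⟨g, hg⟩ := h.exists_left_inv
  exact isSummand_iff_exists_retraction.2 ⟨i, g ∘ₗ p, hg⟩

namespace Indec

theorem iso_of_isSummand {N M : FGMod R} [Nontrivial N] (hM : M.Indec) (h : N.IsSummand M) :
    N.Iso M := by
  obtain ⟨A, B, hAB, ⟨e⟩⟩ := h
  rcases hM.2 A B hAB with rfl | rfl
  · exact absurd e.toEquiv.subsingleton (not_subsingleton N)
  · obtain rfl := eq_top_of_isCompl_bot hAB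
    exact ⟨e ≪≫ₗ Submodule.topEquiv⟩

theorem isNilpotent_or_isUnit {N : FGMod R} [IsArtinian Rᵐᵒᵖ N] [IsNoetherian Rᵐᵒᵖ N]
    (hN : N.Indec) (f : Module.End Rᵐᵒᵖ N) : IsNilpotent f ∨ IsUnit f := by
  obtain ⟨n, hcompl, hn⟩ := (f.eventually_isCompl_ker_pow_range_pow.and
    (Filter.eventually_ge_atTop 1)).exists
  rcases hN.2 _ _ hcompl with hker | hrange
  · rw [hker] at hcompl
    have hunit : IsUnit (f ^ n) := (Module.End.isUnit_iff _).2
      ⟨LinearMap.ker_eq_bot.1 hker, LinearMap.range_eq_top.1 (eq_top_of_bot_isCompl hcompl)⟩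
    exact Or.inr ((isUnit_pow_iff (Nat.one_le_iff_ne_zero.1 hn)).1 hunit)
  · exact Or.inl ⟨n, LinearMap.range_eq_bot.1 hrange⟩

theorem isLocalRing_end {N : FGMod R} [IsArtinian Rᵐᵒᵖ N] [IsNoetherian Rᵐᵒᵖ N] (hN : N.Indec) :
    IsLocalRing (Module.End Rᵐᵒᵖ N) :=
  have := hN.1
  .of_isUnit_or_isUnit_one_sub_self fun f =>
    (hN.isNilpotent_or_isUnit f).symm.imp_right IsNilpotent.isUnit_one_sub

theorem isSummand_or_isSummand {N A B : FGMod R} [IsArtinian Rᵐᵒᵖ N] [IsNoetherian Rᵐᵒᵖ N]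
    (hN : N.Indec) (h : N.IsSummand (A.prod B)) : N.IsSummand A ∨ N.IsSummand B := by
  have : IsLocalRing (Module.End Rᵐᵒᵖ N) := hN.isLocalRing_end
  obtain ⟨(i : N →ₗ[Rᵐᵒᵖ] A × B), (p : A × B →ₗ[Rᵐᵒᵖ] N), hpi⟩ :=
    isSummand_iff_exists_retraction.1 h
  let fA : Module.End Rᵐᵒᵖ N := (p ∘ₗ LinearMap.inl Rᵐᵒᵖ A B) ∘ₗ (LinearMap.fst Rᵐᵒᵖ A B ∘ₗ i)
  let fB : Module.End Rᵐᵒᵖ N := (p ∘ₗ LinearMap.inr Rᵐᵒᵖ A B) ∘ₗ (LinearMap.snd Rᵐᵒᵖ A B ∘ₗ i)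
  have hadd : fA + fB = 1 := by
    ext x
    calc p ((i x).1, 0) + p (0, (i x).2) = p (i x) := by
          rw [← map_add, Prod.fst_add_snd]
      _ = x := LinearMap.congr_fun hpi x
  exact (IsLocalRing.isUnit_or_isUnit_of_add_one hadd).imp
    isSummand_of_isUnit_comp isSummand_of_isUnit_comp

end Indec

theorem exists_iso_prod_of_not_indec {M : FGMod R} [IsArtinian Rᵐᵒᵖ M] [IsNoetherian Rᵐᵒᵖ M]
    [Nontrivial M] (hM : ¬M.Indec) :
    ∃ A B : FGMod R, M.Iso (A.prod B) ∧ Module.length Rᵐᵒᵖ A < Module.length Rᵐᵒᵖ M ∧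
      Module.length Rᵐᵒᵖ B < Module.length Rᵐᵒᵖ M := by
  obtain ⟨A, B, hAB, hA, hB⟩ : ∃ A B : Submodule Rᵐᵒᵖ M, IsCompl A B ∧ A ≠ ⊥ ∧ B ≠ ⊥ := by
    simpa [Indec, ‹Nontrivial M›] using hM
  refine ⟨⟨A⟩, ⟨B⟩, ⟨(Submodule.prodEquivOfIsCompl A B hAB).symm⟩,
    Submodule.length_lt ?_, Submodule.length_lt ?_⟩
  · rintro rfl
    exact hB (eq_bot_of_top_isCompl hAB)
  · rintro rfl
    exact hA (eq_bot_of_isCompl_top hAB)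

theorem induction_indec [IsArtinianRing Rᵐᵒᵖ] {p : FGMod R → Prop}
    (subsingleton : ∀ M : FGMod R, Subsingleton M → p M) (indec : ∀ M : FGMod R, M.Indec → p M)
    (prod : ∀ M A B : FGMod R, M.Iso (A.prod B) → p A → p B → p M) (M : FGMod R) : p M := by
  induction hl : Module.length Rᵐᵒᵖ M using WellFoundedLT.induction generalizing M with
  | ind l ih =>
    subst hl
    rcases subsingleton_or_nontrivial M with hM | hM
    · exact subsingleton M hM
    by_cases hI : M.Indec
    · exact indec M hI
    · obtain ⟨A, B, e, hA, hB⟩ := exists_iso_prod_of_not_indec hI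
      exact prod M A B e (ih _ hA A rfl) (ih _ hB B rfl)

end FGMod

section Syzygy

theorem IsProjCover.prod {A B P Q : FGMod R} {f : P →ₗ[Rᵐᵒᵖ] A} {g : Q →ₗ[Rᵐᵒᵖ] B}
    (hf : IsProjCover A P f) (hg : IsProjCover B Q g) :
    IsProjCover (A.prod B) (P.prod Q) (f.prodMap g) := by
  obtain ⟨hP, hfsurj, hfker⟩ := hf
  obtain ⟨hQ, hgsurj, hgker⟩ := hg
  have : Module.Projective Rᵐᵒᵖ P := hP
  have : Module.Projective Rᵐᵒᵖ Q := hQ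
  have hker : IsSuperfluous (LinearMap.ker (f.prodMap g)) := by
    rw [LinearMap.ker_prodMap]
    exact IsSuperfluous.prod hfker hgker
  exact ⟨(inferInstance : Module.Projective Rᵐᵒᵖ (P × Q)), hfsurj.prodMap hgsurj, hker⟩

theorem IsProjCover.comp_equiv {M M' P : FGMod R} {f : P →ₗ[Rᵐᵒᵖ] M} (hf : IsProjCover M P f)
    (e : M ≃ₗ[Rᵐᵒᵖ] M') : IsProjCover M' P (e.toLinearMap ∘ₗ f) := by
  refine ⟨hf.1, e.surjective.comp hf.2.1, ?_⟩
  rw [LinearEquiv.ker_comp]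
  exact hf.2.2

-- A lift `h` of one cover along the other is onto because the kernel of the target is superfluous,
-- and its section is onto for the same reason, so `h` is bijective.
theorem IsProjCover.exists_equiv {M P Q : FGMod R} {f : P →ₗ[Rᵐᵒᵖ] M} {g : Q →ₗ[Rᵐᵒᵖ] M}
    (hf : IsProjCover M P f) (hg : IsProjCover M Q g) :
    ∃ e : P ≃ₗ[Rᵐᵒᵖ] Q, g ∘ₗ e.toLinearMap = f := by
  have : Module.Projective Rᵐᵒᵖ P := hf.1
  have : Module.Projective Rᵐᵒᵖ Q := hg.1
  obtain ⟨h, hgh⟩ := Module.projective_lifting_property g f hg.2.1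
  have hsurj : Surjective h := IsSuperfluous.surjective_of_comp hg.2.2 (hgh ▸ hf.2.1)
  obtain ⟨s, hs⟩ := Module.projective_lifting_property h LinearMap.id hsurj
  have hfs : f ∘ₗ s = g := by rw [← hgh, LinearMap.comp_assoc, hs, LinearMap.comp_id]
  have hs_surj : Surjective s := IsSuperfluous.surjective_of_comp hf.2.2 (hfs ▸ hg.2.1)
  have hs_right : RightInverse s h := LinearMap.congr_fun hs
  have hinj : Injective h := (hs_right.leftInverse_of_surjective hs_surj).injective
  exact ⟨LinearEquiv.ofBijective h ⟨hinj, hsurj⟩, hgh⟩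

theorem exists_isProjCover [IsArtinianRing Rᵐᵒᵖ] (M : FGMod R) :
    ∃ (P : FGMod R) (f : P →ₗ[Rᵐᵒᵖ] M), IsProjCover M P f := by
  obtain ⟨n, f, hf⟩ := Module.Finite.exists_fin' Rᵐᵒᵖ M
  obtain ⟨P, hP, hsurj, hker⟩ := exists_projective_submodule_isSuperfluous_ker hf
  exact ⟨⟨P⟩, f.domRestrict P, hP, hsurj, hker⟩

namespace IsSyzygy

theorem of_iso {M M' N : FGMod R} (h : IsSyzygy M N) (e : M.Iso M') : IsSyzygy M' N := by
  obtain ⟨P, f, hf, eN⟩ := h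
  refine ⟨P, _, hf.comp_equiv e.some, ?_⟩
  rwa [LinearEquiv.ker_comp]

theorem unique {M N N' : FGMod R} (h : IsSyzygy M N) (h' : IsSyzygy M N') : N.Iso N' := by
  obtain ⟨P, f, hf, ⟨eN⟩⟩ := h
  obtain ⟨Q, g, hg, ⟨eN'⟩⟩ := h'
  obtain ⟨e, rfl⟩ := hf.exists_equiv hg
  rw [LinearMap.ker_comp] at eN
  exact ⟨eN ≪≫ₗ e.ofSubmodule' (LinearMap.ker g) ≪≫ₗ eN'.symm⟩

theorem prod {A A' B B' : FGMod R} (hA : IsSyzygy A A') (hB : IsSyzygy B B') :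
    IsSyzygy (A.prod B) (A'.prod B') := by
  obtain ⟨P, f, hf, ⟨eA⟩⟩ := hA
  obtain ⟨Q, g, hg, ⟨eB⟩⟩ := hB
  exact ⟨P.prod Q, f.prodMap g, hf.prod hg,
    ⟨eA.prodCongr eB ≪≫ₗ (kerProdMapEquiv f g).symm⟩⟩

theorem subsingleton_iff {M N : FGMod R} (h : IsSyzygy M N) : Subsingleton N ↔ M.Proj := by
  obtain ⟨P, f, ⟨hP, hsurj, hker⟩, ⟨e⟩⟩ := h
  have hproj : Module.Projective Rᵐᵒᵖ P := hP
  rw [e.toEquiv.subsingleton_congr, Submodule.subsingleton_iff_eq_bot, LinearMap.ker_eq_bot]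
  constructor
  · exact fun hinj => Module.Projective.of_equiv (LinearEquiv.ofBijective f ⟨hinj, hsurj⟩)
  · intro (hM : Module.Projective Rᵐᵒᵖ M)
    obtain ⟨s, hs⟩ := Module.projective_lifting_property f LinearMap.id hsurj
    have hs_surj : Surjective s :=
      IsSuperfluous.surjective_of_comp hker (hs ▸ surjective_id)
    have hs_right : RightInverse s f := LinearMap.congr_fun hs
    exact (hs_right.leftInverse_of_surjective hs_surj).injective

end IsSyzygy

variable [IsArtinianRing Rᵐᵒᵖ]

theorem exists_isSyzygy (M : FGMod R) : ∃ N, IsSyzygy M N := by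
  obtain ⟨P, f, hf⟩ := exists_isProjCover M
  exact ⟨⟨LinearMap.ker f⟩, P, f, hf, ⟨LinearEquiv.refl _ _⟩⟩

/-- The syzygy `Ω M`, as a choice among the isomorphic modules `N` with `IsSyzygy M N`. -/
noncomputable def FGMod.syzygy (M : FGMod R) : FGMod R := (exists_isSyzygy M).choose

namespace FGMod

theorem isSyzygy_syzygy (M : FGMod R) : IsSyzygy M M.syzygy := (exists_isSyzygy M).choose_spec

theorem syzygy_iso_prod {M A B : FGMod R} (e : M.Iso (A.prod B)) :
    M.syzygy.Iso (A.syzygy.prod B.syzygy) :=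
  (M.isSyzygy_syzygy.of_iso e).unique (A.isSyzygy_syzygy.prod B.isSyzygy_syzygy)

theorem Proj.syzygy {M : FGMod R} (hM : M.Proj) : M.syzygy.Proj :=
  have := M.isSyzygy_syzygy.subsingleton_iff.2 hM
  M.syzygy.proj_of_subsingleton

theorem IsSummand.syzygy {N M : FGMod R} (h : N.IsSummand M) : N.syzygy.IsSummand M.syzygy := by
  obtain ⟨C, e⟩ := h.exists_iso_prod
  exact (isSummand_prod_left _ _).trans (syzygy_iso_prod e).symm.isSummand

theorem Proj.iterate_syzygy {M : FGMod R} (hM : M.Proj) (n : ℕ) :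
    (FGMod.syzygy^[n] M).Proj :=
  Function.Iterate.rec FGMod.Proj hM (fun _ h => FGMod.Proj.syzygy h) n

theorem IsSummand.iterate_syzygy {N M : FGMod R} (h : N.IsSummand M) (n : ℕ) :
    (FGMod.syzygy^[n] N).IsSummand (FGMod.syzygy^[n] M) := by
  induction n generalizing N M with
  | zero => exact h
  | succ _ ih => exact ih h.syzygy

end FGMod

theorem hasPdLE_iff_proj_iterate_syzygy {n : ℕ} {M : FGMod R} :
    HasPdLE n M ↔ (FGMod.syzygy^[n] M).Proj := by
  induction n generalizing M with
  | zero => rfl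
  | succ n ih =>
    constructor
    · rintro (hM | ⟨N, hN, h⟩)
      · exact hM.iterate_syzygy (n + 1)
      · exact ((M.isSyzygy_syzygy.unique hN).isSummand.iterate_syzygy n).proj (ih.1 h)
    · exact fun h => Or.inr ⟨M.syzygy, M.isSyzygy_syzygy, ih.2 h⟩

theorem HasPdLE.mono {m n : ℕ} {M : FGMod R} (h : HasPdLE m M) (hmn : m ≤ n) : HasPdLE n M := by
  obtain ⟨k, rfl⟩ := Nat.exists_eq_add_of_le' hmn
  rw [hasPdLE_iff_proj_iterate_syzygy] at h ⊢
  rw [Function.iterate_add_apply]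
  exact h.iterate_syzygy k

theorem HasPdLE.of_isSummand {n : ℕ} {N M : FGMod R} (h : HasPdLE n M) (hN : N.IsSummand M) :
    HasPdLE n N := by
  rw [hasPdLE_iff_proj_iterate_syzygy] at h ⊢
  exact (hN.iterate_syzygy n).proj h

end Syzygy

section ClassGroup

theorem ITcls_of_proj {P : FGMod R} (hP : P.Proj) : ITcls R P = 0 :=
  (QuotientAddGroup.eq_zero_iff _).2 (AddSubgroup.subset_closure (Or.inr ⟨P, hP, rfl⟩))

theorem ITcls_eq_add {M A B : FGMod R} (e : M.Iso (A.prod B)) :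
    ITcls R M = ITcls R A + ITcls R B := by
  have hrel : ITcls R M - ITcls R A - ITcls R B = 0 :=
    (QuotientAddGroup.eq_zero_iff _).2 (AddSubgroup.subset_closure (Or.inl ⟨M, A, B, e, rfl⟩))
  rwa [sub_sub, sub_eq_zero] at hrel

theorem ITcls_eq_of_iso {M N : FGMod R} (e : M.Iso N) : ITcls R M = ITcls R N := by
  let Z : FGMod R := ⟨PUnit⟩
  have : Subsingleton Z := inferInstanceAs (Subsingleton PUnit)
  have hMZ : M.Iso (N.prod Z) := ⟨e.some ≪≫ₗ LinearEquiv.prodUnique.symm⟩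
  rw [ITcls_eq_add hMZ, ITcls_of_proj Z.proj_of_subsingleton, add_zero]

theorem ITgen_of_proj {M : FGMod R} (hM : M.Proj) : ITgen R M = ⊥ := by
  rw [ITgen, AddSubgroup.closure_eq_bot_iff]
  rintro _ ⟨N, hN, -, hNproj, -⟩
  exact absurd (hN.proj hM) hNproj

theorem ITgen_mono {M N : FGMod R} (h : N.IsSummand M) : ITgen R N ≤ ITgen R M := by
  refine AddSubgroup.closure_mono ?_
  rintro _ ⟨X, hX, hX'⟩
  exact ⟨X, hX.trans h, hX'⟩

theorem ITgen_of_indec {M : FGMod R} (hM : M.Indec) :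
    ITgen R M = AddSubgroup.zmultiples (ITcls R M) := by
  by_cases hproj : M.Proj
  · rw [ITgen_of_proj hproj, ITcls_of_proj hproj, AddSubgroup.zmultiples_zero_eq_bot]
  rw [AddSubgroup.zmultiples_eq_closure, ITgen]
  congr 1
  ext x
  constructor
  · rintro ⟨N, hN, hNindec, -, rfl⟩
    have := hNindec.1
    exact ITcls_eq_of_iso (hM.iso_of_isSummand hN)
  · rintro rfl
    exact ⟨M, FGMod.Iso.isSummand ⟨LinearEquiv.refl _ _⟩, hM, hproj, rfl⟩

variable [IsArtinianRing Rᵐᵒᵖ]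

theorem ITgen_eq_sup {M A B : FGMod R} (e : M.Iso (A.prod B)) :
    ITgen R M = ITgen R A ⊔ ITgen R B := by
  apply le_antisymm
  · rw [ITgen, AddSubgroup.closure_le]
    rintro x ⟨N, hN, hNindec, hx⟩
    rcases hNindec.isSummand_or_isSummand (hN.trans e.isSummand) with h | h
    · exact AddSubgroup.mem_sup_left (AddSubgroup.subset_closure ⟨N, h, hNindec, hx⟩)
    · exact AddSubgroup.mem_sup_right (AddSubgroup.subset_closure ⟨N, h, hNindec, hx⟩)
  · exact sup_le (ITgen_mono ((A.isSummand_prod_left B).trans e.symm.isSummand))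
      (ITgen_mono ((A.isSummand_prod_right B).trans e.symm.isSummand))

theorem ITgen_fg (M : FGMod R) : (ITgen R M).FG := by
  induction M using FGMod.induction_indec with
  | subsingleton M _ =>
    rw [ITgen_of_proj M.proj_of_subsingleton]
    exact AddSubgroup.FG.bot
  | indec M hM =>
    rw [ITgen_of_indec hM, AddSubgroup.zmultiples_eq_closure]
    exact ⟨{ITcls R M}, by rw [Finset.coe_singleton]⟩
  | prod M A B e hA hB =>
    rw [ITgen_eq_sup e]
    exact hA.sup hB

theorem ITcls_mem_ITgen (M : FGMod R) : ITcls R M ∈ ITgen R M := by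
  induction M using FGMod.induction_indec with
  | subsingleton M _ =>
    rw [ITcls_of_proj M.proj_of_subsingleton]
    exact zero_mem _
  | indec M hM =>
    rw [ITgen_of_indec hM]
    exact AddSubgroup.mem_zmultiples _
  | prod M A B e hA hB =>
    rw [ITgen_eq_sup e, ITcls_eq_add e]
    exact AddSubgroup.add_mem_sup hA hB

/-- The length of `Ω M`, as a natural number. It is additive in `M` and vanishes exactly on the
projective modules, so it detects them in `K`. -/
noncomputable def syzygyLength (M : FGMod R) : ℕ := (Module.length Rᵐᵒᵖ M.syzygy).toNat

theorem syzygyLength_eq_add {M A B : FGMod R} (e : M.Iso (A.prod B)) :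
    syzygyLength M = syzygyLength A + syzygyLength B := by
  obtain ⟨e'⟩ := FGMod.syzygy_iso_prod e
  rw [syzygyLength, e'.length_eq]
  exact (congrArg ENat.toNat (Module.length_prod _ _ _)).trans
    (ENat.toNat_add Module.length_ne_top Module.length_ne_top)

theorem syzygyLength_eq_zero_iff {M : FGMod R} : syzygyLength M = 0 ↔ M.Proj := by
  rw [syzygyLength, ENat.toNat_eq_zero, or_iff_left Module.length_ne_top,
    Module.length_eq_zero_iff, M.isSyzygy_syzygy.subsingleton_iff]

variable (R) in
/-- The homomorphism `K → ℤ` induced by `syzygyLength`. -/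
noncomputable def syzygyLengthHom : ITK R →+ ℤ :=
  QuotientAddGroup.lift _ (FreeAbelianGroup.lift fun M => (syzygyLength M : ℤ)) <| by
    rw [AddSubgroup.closure_le]
    rintro _ (⟨M, A, B, e, rfl⟩ | ⟨P, hP, rfl⟩)
    · simp [syzygyLength_eq_add e]
    · simp [syzygyLength_eq_zero_iff.2 hP]

theorem syzygyLengthHom_ITcls (M : FGMod R) :
    syzygyLengthHom R (ITcls R M) = syzygyLength M :=
  FreeAbelianGroup.lift_apply_of _ _

theorem ITcls_mem_torsion_iff {M : FGMod R} :
    ITcls R M ∈ AddCommGroup.torsion (ITK R) ↔ M.Proj := by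
  constructor
  · intro h
    have htors : IsOfFinAddOrder (syzygyLengthHom R (ITcls R M)) :=
      (syzygyLengthHom R).isOfFinAddOrder h
    rw [isOfFinAddOrder_iff_eq_zero, syzygyLengthHom_ITcls, Nat.cast_eq_zero] at htors
    exact syzygyLength_eq_zero_iff.1 htors
  · intro hM
    rw [ITcls_of_proj hM]
    exact zero_mem _

end ClassGroup

section Rank

theorem rkIT_eq_zero_iff_le_torsion {H : AddSubgroup (ITK R)} (hH : H.FG) :
    rkIT R H = 0 ↔ H ≤ AddCommGroup.torsion (ITK R) := by
  have : Module.Finite ℤ (AddSubgroup.toIntSubmodule H) :=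
    Module.Finite.iff_fg.2 ((Submodule.fg_iff_addSubgroup_fg _).2 hH)
  rw [rkIT, Module.finrank_eq_zero_iff]
  simp only [SetLike.le_def, AddCommGroup.mem_torsion, isOfFinAddOrder_iff_zsmul_eq_zero]
  constructor
  · intro h x hx
    obtain ⟨a, ha, hax⟩ := h ⟨x, hx⟩
    exact ⟨a, ha, congrArg Subtype.val hax⟩
  · rintro h ⟨x, hx⟩
    obtain ⟨a, ha, hax⟩ := h hx
    exact ⟨a, ha, Subtype.ext hax⟩

variable [IsArtinianRing Rᵐᵒᵖ] {OmK : AddMonoid.End (ITK R)}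

theorem IsSyzygyEnd.pow_ITcls (hOm : IsSyzygyEnd R OmK) (n : ℕ) (M : FGMod R) :
    (OmK ^ n) (ITcls R M) = ITcls R (FGMod.syzygy^[n] M) := by
  induction n generalizing M with
  | zero => rfl
  | succ n ih => 
    rw [pow_succ, AddMonoid.End.coe_mul, Function.comp_apply, hOm M _ M.isSyzygy_syzygy, ih,
      Function.iterate_succ_apply]

theorem IsSyzygyEnd.pow_ITcls_mem_torsion_iff (hOm : IsSyzygyEnd R OmK) {n : ℕ} {M : FGMod R} :
    (OmK ^ n) (ITcls R M) ∈ AddCommGroup.torsion (ITK R) ↔ HasPdLE n M := by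
  rw [hOm.pow_ITcls, ITcls_mem_torsion_iff, hasPdLE_iff_proj_iterate_syzygy]

theorem IsSyzygyEnd.rkIT_map_pow_eq_zero_iff (hOm : IsSyzygyEnd R OmK) {n : ℕ} {M : FGMod R} :
    rkIT R ((ITgen R M).map ((OmK ^ n : AddMonoid.End (ITK R)) : ITK R →+ ITK R)) = 0 ↔
      HasPdLE n M := by
  have hfg : ((ITgen R M).map ((OmK ^ n : AddMonoid.End (ITK R)) : ITK R →+ ITK R)).FG :=
    (AddSubgroup.fg_iff_addSubmonoid_fg _).2
      (((AddSubgroup.fg_iff_addSubmonoid_fg _).1 (ITgen_fg M)).map _)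
  refine (rkIT_eq_zero_iff_le_torsion hfg).trans
    (AddSubgroup.map_le_iff_le_comap.trans ⟨fun h => ?_, fun h => ?_⟩)
  · exact hOm.pow_ITcls_mem_torsion_iff.1 (h (ITcls_mem_ITgen M))
  · rw [ITgen, AddSubgroup.closure_le]
    rintro _ ⟨N, hN, -, -, rfl⟩
    exact hOm.pow_ITcls_mem_torsion_iff.2 (h.of_isSummand hN)

end Rank

/-- If `R` is right artinian and `M` is a f.g. right `R`-module of
finite projective dimension, then `φ(M) = pd M`. -/
theorem phi_eq_pd_of_finPd (R : Type u) [Ring R] [IsArtinianRing Rᵐᵒᵖ]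
    (OmK : AddMonoid.End (ITK R)) (hOm : IsSyzygyEnd R OmK)
    (M : FGMod R) (hM : FinPd M) :
    phiIT R OmK M = pdIT M := by
  obtain ⟨d, hd⟩ := hM
  refine congrArg sInf (Set.ext fun n => ⟨fun hconst => ?_, fun hn i hni => ?_⟩)
  · have hmax := hOm.rkIT_map_pow_eq_zero_iff.2 (hd.mono (le_max_right n d))
    exact hOm.rkIT_map_pow_eq_zero_iff.1 ((hconst _ (le_max_left n d)).symm.trans hmax)
  · rw [hOm.rkIT_map_pow_eq_zero_iff.2 hn, hOm.rkIT_map_pow_eq_zero_iff.2 (hn.mono hni)]
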